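/- Let H be a finite simple graph with at least one edge. Then there exists an integer d such that every finite simple graph with no H minor is (1, d)-colourable if and only if H is isomorphic to the disjoint union of a star K_{1,k} for some k ≥ 1 and some (possibly zero) number of isolated vertices. -/

import Mathlib

/-!
A graph that is not `(1, d)`-colourable is exactly one with a vertex of degree greater than `d`.

If `H` is a star with `k` leaves plus `m` isolated vertices, a vertex of degree at least `k + m`
together with its neighbours already contains `H` as a subgraph, so `d = k + m` works
(`isMinor_starPlusIsolated`).

Conversely, `K_{1,d+1}` is not `(1, d)`-colourable, so `H` must be a minor of a star. Every edge of
the star contains its centre, so every edge of `H` contains the one vertex whose branch set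
contains the centre (`exists_center_of_isMinor_star`), and a graph with such a vertex is a star plus
isolated vertices (`exists_iso_starPlusIsolated`).
-/


open SimpleGraph

universe u v

section Defs

variable {V : Type u} {α : Type v}

/-- `H` is isomorphic to a subgraph of `G`: there is an injective graph homomorphism. -/
def ContainsSubgraph (G : SimpleGraph V) (H : SimpleGraph α) : Prop :=
  ∃ f : H →g G, Function.Injective f

/-- `G` is `(k,d)`-choosable: for every assignment of lists of exactly `k` colours there is a
colouring from the lists in which every vertex has at most `d` neighbours of its own colour. -/
def Choosable (G : SimpleGraph V) (k : ℕ) (d : ℤ) : Prop :=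
  ∀ L : V → Finset ℕ, (∀ v, (L v).card = k) →
    ∃ c : V → ℕ, (∀ v, c v ∈ L v) ∧
      ∀ v, (({w | G.Adj v w ∧ c w = c v}.ncard : ℤ)) ≤ d

/-- `G` is `(k,d)`-colourable: the vertices can be `k`-coloured with every vertex having at most
`d` neighbours of its own colour. -/
def DefColorable (G : SimpleGraph V) (k d : ℕ) : Prop :=
  ∃ c : V → Fin k, ∀ v, {w | G.Adj v w ∧ c w = c v}.ncard ≤ d

/-- `H` is a minor of `G`, via pairwise disjoint connected branch sets. -/
def IsMinor (H : SimpleGraph α) (G : SimpleGraph V) : Prop :=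
  ∃ B : α → Set V,
    (∀ a, (B a).Nonempty) ∧
    (∀ a, (G.induce (B a)).Connected) ∧
    (Pairwise fun a b => Disjoint (B a) (B b)) ∧
    (∀ a b, H.Adj a b → ∃ x ∈ B a, ∃ y ∈ B b, G.Adj x y)

/-- A subdivision of `H` whose path lengths all satisfy `lenOK` occurs as a subgraph of `G`:
the branch vertices are embedded injectively by `f`, each edge of `H` is replaced by a path of
`G` between the corresponding branch vertices, internal vertices of these paths avoid branch
vertices, and distinct paths meet only in common endpoints. -/
def HasSubdivWith (G : SimpleGraph V) (H : SimpleGraph α) (lenOK : ℕ → Prop) : Prop :=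
  ∃ f : α → V, Function.Injective f ∧
    ∃ P : ∀ ⦃a b : α⦄, H.Adj a b → G.Walk (f a) (f b),
      (∀ ⦃a b⦄ (h : H.Adj a b), (P h).IsPath ∧ lenOK (P h).length) ∧
      (∀ ⦃a b⦄ (h : H.Adj a b) (c : α), f c ∈ (P h).support → c = a ∨ c = b) ∧
      (∀ ⦃a b⦄ (h : H.Adj a b) ⦃a' b'⦄ (h' : H.Adj a' b'), s(a, b) ≠ s(a', b') →
        ∀ x ∈ (P h).support, x ∈ (P h').support →
          (x = f a ∨ x = f b) ∧ (x = f a' ∨ x = f b'))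

/-- Some `(≤ k)`-subdivision of `H` (each edge replaced by a path of length at most `k+1`)
is a subgraph of `G`. -/
def HasSubdivLE (G : SimpleGraph V) (k : ℕ) (H : SimpleGraph α) : Prop :=
  HasSubdivWith G H fun L => L ≤ k + 1

/-- `H` is a topological minor of `G`: some subdivision of `H` is a subgraph of `G`. -/
def HasTopMinor (G : SimpleGraph V) (H : SimpleGraph α) : Prop :=
  HasSubdivWith G H fun _ => True

/-- The exact `1`-subdivision of `H`: every edge is subdivided exactly once. -/
def exactOneSubdivision (H : SimpleGraph α) : SimpleGraph (α ⊕ H.edgeSet) :=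
  SimpleGraph.fromRel fun x y =>
    match x, y with
    | Sum.inl a, Sum.inr e => a ∈ (e : Sym2 α)
    | _, _ => False

/-- The graph `K*_{s,t}`: `K_{s,t}` together with `binom s 2` new vertices, each adjacent to a
distinct pair of vertices on the side of size `s`. -/
def KstarGraph (s t : ℕ) :
    SimpleGraph (Fin s ⊕ (Fin t ⊕ {p : Fin s × Fin s // p.1 < p.2})) :=
  SimpleGraph.fromRel fun x y =>
    match x, y with
    | Sum.inl _, Sum.inr (Sum.inl _) => True
    | Sum.inl a, Sum.inr (Sum.inr c) => a = c.1.1 ∨ a = c.1.2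
    | _, _ => False

/-- The auxiliary function `N₁(s,t,δ,δ₁)`. -/
noncomputable def N1 (s t : ℕ) (δ δ₁ : ℝ) : ℝ :=
  if s = 1 then (t : ℝ) - 1
  else if s = 2 then (δ - 2) * δ₁ * t / 2 + δ
  else (δ - s) * ((Nat.choose ⌊δ₁⌋₊ (s - 1) : ℝ) * ((t : ℝ) - 1) + δ₁ / 2) + δ

/-- The maximum average degree of `G`: maximum of `2|E(H)|/|V(H)|` over nonempty subgraphs. -/
noncomputable def mad [Fintype V] (G : SimpleGraph V) : ℝ :=
  sSup {q : ℝ | ∃ H : G.Subgraph, H.verts.Nonempty ∧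
    q = 2 * (H.edgeSet.ncard : ℝ) / (H.verts.ncard : ℝ)}

/-- `∇₀(G)`: maximum of `|E(H)|/|V(H)|` over nonempty subgraphs of `G`. -/
noncomputable def nabla0 [Fintype V] (G : SimpleGraph V) : ℝ :=
  sSup {q : ℝ | ∃ H : G.Subgraph, H.verts.Nonempty ∧
    q = (H.edgeSet.ncard : ℝ) / (H.verts.ncard : ℝ)}

/-- `∇₁(G)`: maximum of `|E(H)|/|V(H)|` over graphs `H` some `(≤2)`-subdivision of which is a
subgraph of `G`. -/
noncomputable def nabla1 [Fintype V] (G : SimpleGraph V) : ℝ :=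
  sSup {q : ℝ | ∃ (n : ℕ) (H : SimpleGraph (Fin n)), 0 < n ∧
    HasSubdivLE G 2 H ∧ q = (H.edgeSet.ncard : ℝ) / (n : ℝ)}

end Defs

/-- The vertex type of the graph `G(s,N)` (here indexed by `t = s - 2`). -/
def GVert : ℕ → ℕ → Type
  | 0, N => Fin (N + 2)
  | t + 1, N => Option (Fin (N + 1) × GVert t N)

/-- The graph `G(s,N)` (indexed by `t = s - 2`): `GGraph 0 N = G(2,N) = K_{1,N+1}`, and
`GGraph (t+1) N = G(t+3,N)` is obtained from `N+1` disjoint copies of `GGraph t N` by adding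
a dominant vertex. -/
def GGraph : (t : ℕ) → (N : ℕ) → SimpleGraph (GVert t N)
  | 0, N => SimpleGraph.fromRel fun i j => i = (0 : Fin (N + 2))
  | t + 1, N => SimpleGraph.fromRel fun x y =>
      match x, y with
      | none, some _ => True
      | some (i, a), some (j, b) => i = j ∧ (GGraph t N).Adj a b
      | _, _ => False

section More

variable {V : Type u} {α : Type v}

/-- `r` is a forest order witnessing that `H` is a subgraph of the closure of a rooted forest:
`r` is a partial order in which the set of ancestors of each vertex is a chain, and adjacent
vertices of `H` are comparable. -/
def IsForestOrder (H : SimpleGraph α) (r : α → α → Prop) : Prop :=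
  IsPartialOrder α r ∧ (∀ v : α, IsChain r {u | r u v}) ∧
    (∀ x y, H.Adj x y → r x y ∨ r y x)

/-- The tree-depth of `H`: the minimum height of a rooted forest whose closure contains `H`
as a subgraph (the height being measured as the maximum number of vertices on a
root--to--leaf path). -/
noncomputable def treeDepth (H : SimpleGraph α) : ℕ :=
  sInf {k | ∃ r : α → α → Prop, IsForestOrder H r ∧ ∀ v, {u | r u v}.ncard ≤ k}

/-- The vertex cover number `τ(H)`. -/
noncomputable def vertexCoverNumber (H : SimpleGraph α) : ℕ :=
  sInf {k | ∃ S : Set α, S.ncard = k ∧ ∀ ⦃x y⦄, H.Adj x y → x ∈ S ∨ y ∈ S}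

/-- The graph obtained from `ℓ` disjoint copies of the star `K_{1,k}` by adding one dominant
vertex. -/
def Hlk (l k : ℕ) : SimpleGraph (Option (Fin l × Fin (k + 1))) :=
  SimpleGraph.fromRel fun x y =>
    match x, y with
    | none, some _ => True
    | some (i, a), some (j, _) => i = j ∧ a = 0
    | _, _ => False

/-- The star `K_{1,k}` together with `m` isolated vertices. -/
def StarPlusIsolated (k m : ℕ) : SimpleGraph (Fin (k + 1) ⊕ Fin m) :=
  SimpleGraph.fromRel fun x y =>
    match x, y with
    | Sum.inl i, Sum.inl _ => i = 0
    | _, _ => False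

/-- `G` admits a `k`-stack layout: a linear ordering of the vertices (given by an injection
into `ℕ`) and an assignment of the edges to `k` stacks so that no two edges in a common stack
cross. -/
def HasStackLayout (G : SimpleGraph V) (k : ℕ) : Prop :=
  ∃ f : V → ℕ, Function.Injective f ∧
    ∃ σ : Sym2 V → Fin k,
      ∀ a b c d : V, G.Adj a b → G.Adj c d → σ s(a, b) = σ s(c, d) →
        ¬(f a < f c ∧ f c < f b ∧ f b < f d)

/-- `G` admits a `k`-queue layout: a linear ordering of the vertices (given by an injection
into `ℕ`) and an assignment of the edges to `k` queues so that no two edges in a common queue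
are nested. -/
def HasQueueLayout (G : SimpleGraph V) (k : ℕ) : Prop :=
  ∃ f : V → ℕ, Function.Injective f ∧
    ∃ σ : Sym2 V → Fin k,
      ∀ a b c d : V, G.Adj a b → G.Adj c d → σ s(a, b) = σ s(c, d) →
        ¬(f a < f c ∧ f c < f d ∧ f d < f b)

end More

/-- The star with centre `none` and leaf set `Fin n`. -/
def starOn (n : ℕ) : SimpleGraph (Option (Fin n)) :=
  SimpleGraph.fromRel fun x _ => x = none

lemma starOn_adj {n : ℕ} {x y : Option (Fin n)} :
    (starOn n).Adj x y ↔ x ≠ y ∧ (x = none ∨ y = none) := by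
  simp [starOn]

lemma starPlusIsolated_adj_inl {k m : ℕ} {i j : Fin (k + 1)} :
    (StarPlusIsolated k m).Adj (Sum.inl i) (Sum.inl j) ↔ i ≠ j ∧ (i = 0 ∨ j = 0) := by
  simp [StarPlusIsolated]

lemma not_starPlusIsolated_adj_inr_left {k m : ℕ} (i : Fin m) (y : Fin (k + 1) ⊕ Fin m) :
    ¬ (StarPlusIsolated k m).Adj (Sum.inr i) y := by
  cases y <;> simp [StarPlusIsolated]

lemma not_starPlusIsolated_adj_inr_right {k m : ℕ} (i : Fin m) (x : Fin (k + 1) ⊕ Fin m) :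
    ¬ (StarPlusIsolated k m).Adj x (Sum.inr i) := by
  cases x <;> simp [StarPlusIsolated]

lemma defColorable_one_iff {V : Type*} (G : SimpleGraph V) (d : ℕ) :
    DefColorable G 1 d ↔ ∀ v, {w | G.Adj v w}.ncard ≤ d := by
  have key (c : V → Fin 1) (v : V) : {w | G.Adj v w ∧ c w = c v} = {w | G.Adj v w} := by
    ext w
    simp [Subsingleton.elim (c w) (c v)]
  simp only [DefColorable, key]
  exact ⟨fun ⟨_, h⟩ => h, fun h => ⟨fun _ => 0, h⟩⟩

lemma ContainsSubgraph.isMinor {V α : Type*} {G : SimpleGraph V} {H : SimpleGraph α}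
    (h : ContainsSubgraph G H) : IsMinor H G := by
  obtain ⟨f, hf⟩ := h
  refine ⟨fun a => {f a}, fun a => Set.singleton_nonempty _, fun a => ?_, fun a b hab => ?_,
    fun a b hab => ⟨f a, rfl, f b, rfl, f.map_adj hab⟩⟩
  · exact SimpleGraph.Connected.of_subsingleton
  · simpa using hf.ne hab

/-- A vertex of degree at least `k + m` forces the star with `k` leaves and `m` isolated vertices:
all `k + m` non-central vertices are placed on its neighbours. -/
lemma isMinor_starPlusIsolated {V α : Type*} [Finite V] {G : SimpleGraph V} {H : SimpleGraph α}
    {k m : ℕ} (e : H ≃g StarPlusIsolated k m) (v : V) (hv : k + m ≤ {w | G.Adj v w}.ncard) :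
    IsMinor H G := by
  apply ContainsSubgraph.isMinor
  have : Fintype {w | G.Adj v w} := Fintype.ofFinite _
  obtain ⟨g⟩ : Nonempty (Fin k ⊕ Fin m ↪ {w | G.Adj v w}) := by
    apply Function.Embedding.nonempty_of_card_le
    rw [Set.ncard_eq_toFinset_card', Set.toFinset_card] at hv
    simpa using hv
  have hg (x) : G.Adj v (g x) := (g x).2
  let f : Fin (k + 1) ⊕ Fin m → V :=
    Sum.elim (Fin.cons v fun i => g (Sum.inl i)) fun i => g (Sum.inr i)
  have hf : Function.Injective f := by
    have hinj (x y) : (g x : V) = g y ↔ x = y := by simp [Subtype.val_inj]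
    rintro (x | x) (y | y) h
    · cases x using Fin.cases <;> cases y using Fin.cases <;>
        simp_all [f, (hg _).ne, (hg _).ne']
    · cases x using Fin.cases <;> simp_all [f, (hg _).ne]
    · cases y using Fin.cases <;> simp_all [f, (hg _).ne']
    · simp_all [f]
  refine ⟨⟨fun a => f (e a), fun {a b} hab => ?_⟩, hf.comp e.injective⟩
  have h := e.map_adj_iff.2 hab
  generalize e a = x at h ⊢
  generalize e b = y at h ⊢
  rcases x with x | x
  · rcases y with y | y
    · rw [starPlusIsolated_adj_inl] at h
      cases x using Fin.cases <;> cases y using Fin.cases <;> simp_all [f, (hg _).symm]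
    · exact absurd h (not_starPlusIsolated_adj_inr_right _ _)
  · exact absurd h (not_starPlusIsolated_adj_inr_left _ _)

lemma not_defColorable_starOn (d : ℕ) : ¬ DefColorable (starOn (d + 1)) 1 d := by
  rw [defColorable_one_iff]
  intro h
  have h' := h none
  have hs : {w | (starOn (d + 1)).Adj none w} = Set.range some := by
    ext w
    cases w <;> simp [starOn_adj]
  rw [hs, ← Set.image_univ, Set.ncard_image_of_injective _ (Option.some_injective _)] at h'
  simp at h'

lemma exists_center_of_isMinor_star {α : Type*} {H : SimpleGraph α} {n : ℕ}
    (hH : H.edgeSet.Nonempty) (h : IsMinor H (starOn n)) :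
    ∃ a₀, ∀ a b, H.Adj a b → a = a₀ ∨ b = a₀ := by
  obtain ⟨B, -, -, hdisj, hB⟩ := h
  have key (a b) (hab : H.Adj a b) : none ∈ B a ∨ none ∈ B b := by
    obtain ⟨x, hx, y, hy, hxy⟩ := hB a b hab
    rcases (starOn_adj.1 hxy).2 with rfl | rfl
    · exact Or.inl hx
    · exact Or.inr hy
  have huniq (a b) (ha : none ∈ B a) (hb : none ∈ B b) : a = b := by
    by_contra hne
    exact Set.disjoint_left.1 (hdisj hne) ha hb
  obtain ⟨a₀, h₀⟩ : ∃ a₀, none ∈ B a₀ := by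
    obtain ⟨e, he⟩ := hH
    induction e with | _ a b
    rcases key a b he with h | h
    · exact ⟨a, h⟩
    · exact ⟨b, h⟩
  exact ⟨a₀, fun a b hab => (key a b hab).imp (huniq _ _ · h₀) (huniq _ _ · h₀)⟩

/-- A graph with an edge, all of whose edges contain `a₀`, is a star plus isolated vertices: the
leaves are the neighbours of `a₀`, and the remaining vertices are isolated. -/
lemma exists_iso_starPlusIsolated {α : Type*} [Finite α] {H : SimpleGraph α}
    (hH : H.edgeSet.Nonempty) (a₀ : α) (h₀ : ∀ a b, H.Adj a b → a = a₀ ∨ b = a₀) :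
    ∃ k m : ℕ, 1 ≤ k ∧ Nonempty (H ≃g StarPlusIsolated k m) := by
  let e₁ := (Finite.equivFin {x // H.Adj a₀ x}).symm
  let e₂ := (Finite.equivFin {x // x ≠ a₀ ∧ ¬ H.Adj a₀ x}).symm
  have h₁ (i) : H.Adj a₀ (e₁ i) := (e₁ i).2
  have h₂ (i) : (e₂ i : α) ≠ a₀ := (e₂ i).2.1
  have h₂' (i) : ¬ H.Adj a₀ (e₂ i) := (e₂ i).2.2
  have i₁ (i j) : (e₁ i : α) = e₁ j ↔ i = j := by simp [Subtype.val_inj]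
  have i₂ (i j) : (e₂ i : α) = e₂ j ↔ i = j := by simp [Subtype.val_inj]
  have h₁₂ (i j) : (e₁ i : α) ≠ e₂ j := fun h => h₂' j (h ▸ h₁ i)
  let f : Fin (_ + 1) ⊕ Fin _ → α :=
    Sum.elim (Fin.cons a₀ fun i => (e₁ i : α)) fun i => (e₂ i : α)
  have f_zero : f (Sum.inl 0) = a₀ := rfl
  have f_succ (i) : f (Sum.inl (Fin.succ i)) = e₁ i := rfl
  have f_inr (i) : f (Sum.inr i) = e₂ i := rfl
  refine ⟨_, _, ?_, ⟨RelIso.symm ⟨Equiv.ofBijective f ⟨?_, fun x => ?_⟩, fun {x y} => ?_⟩⟩⟩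
  · have : Nonempty {x // H.Adj a₀ x} := by
      obtain ⟨e, he⟩ := hH
      induction e with | _ a b
      rcases h₀ a b he with rfl | rfl
      · exact ⟨b, he⟩
      · exact ⟨a, he.symm⟩
    exact Nat.card_pos
  · rintro (x | x) (y | y) h
    · cases x using Fin.cases <;> cases y using Fin.cases <;>
        simp_all [(h₁ _).ne, (h₁ _).ne']
    · cases x using Fin.cases <;> simp_all [(h₂ _).symm]
    · cases y using Fin.cases <;> simp_all [(h₁₂ _ _).symm]
    · simp_all
  · by_cases hx : x = a₀
    · exact ⟨Sum.inl 0, by simp [f_zero, hx]⟩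
    by_cases hx' : H.Adj a₀ x
    · exact ⟨Sum.inl (e₁.symm ⟨x, hx'⟩).succ, by simp [f_succ]⟩
    · exact ⟨Sum.inr (e₂.symm ⟨x, hx, hx'⟩), by simp [f_inr]⟩
  · have hno (a b) (ha : a ≠ a₀) (hb : b ≠ a₀) : ¬ H.Adj a b := fun h =>
      (h₀ a b h).elim ha hb
    have h₁' (i) : (e₁ i : α) ≠ a₀ := (h₁ i).ne'
    change H.Adj (f x) (f y) ↔ _
    rcases x with x | x <;> rcases y with y | y
    · rw [starPlusIsolated_adj_inl]
      cases x using Fin.cases <;> cases y using Fin.cases <;>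
        simp [f_zero, f_succ, h₁, (h₁ _).symm, hno _ _ (h₁' _) (h₁' _), (Fin.succ_ne_zero _).symm]
    · refine iff_of_false ?_ (not_starPlusIsolated_adj_inr_right _ _)
      cases x using Fin.cases
      · exact h₂' y
      · exact hno _ _ (h₁' _) (h₂ y)
    · refine iff_of_false ?_ (not_starPlusIsolated_adj_inr_left _ _)
      cases y using Fin.cases
      · exact fun h => h₂' x h.symm
      · exact hno _ _ (h₂ x) (h₁' _)
    · exact iff_of_false (hno _ _ (h₂ x) (h₂ y)) (not_starPlusIsolated_adj_inr_left _ _)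

/-- For a finite simple graph `H` with at least one edge: there is an integer `d` such that
every `H`-minor-free finite simple graph is `(1, d)`-colourable, if and only if `H` is
isomorphic to a star `K_{1,k}` (`k ≥ 1`) together with some number of isolated vertices. -/
theorem stmt16 {α : Type} [Fintype α] (H : SimpleGraph α) (hH : H.edgeSet.Nonempty) :
    (∃ d : ℕ, ∀ (V : Type) [Fintype V] (G : SimpleGraph V),
        ¬ IsMinor H G → DefColorable G 1 d) ↔
    ∃ k m : ℕ, 1 ≤ k ∧ Nonempty (H ≃g StarPlusIsolated k m) := by
  constructor
  · rintro ⟨d, hd⟩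
    have hminor : IsMinor H (starOn (d + 1)) :=
      not_imp_comm.1 (hd _ _) (not_defColorable_starOn d)
    obtain ⟨a₀, h₀⟩ := exists_center_of_isMinor_star hH hminor
    exact exists_iso_starPlusIsolated hH a₀ h₀
  · rintro ⟨k, m, -, ⟨e⟩⟩
    refine ⟨k + m, fun V _ G hG => (defColorable_one_iff G _).2 fun v => ?_⟩
    by_contra hlt
    exact hG (isMinor_starPlusIsolated e v (by omega))
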